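/- arXiv:1611.09814 — 2 statements merged into one kernel-verified Lean document; each statement's English description precedes it below -/
import Mathlib

section
/- Let P be a symmetric positive definite n×n real matrix, B an n×m real matrix, K an m×n real matrix, and A₁, …, A_N n×n real matrices such that (Aᵢ + BK)ᵀ P + P (Aᵢ + BK) is negative definite for every i ∈ {1, …, N}. Let σ : ℝ → {1, …, N} be an arbitrary switching signal and let x : ℝ → ℝⁿ satisfy, for every t ≥ 0, x′(t) = (A_{σ(t)} + BK) x(t). Then x(t) → 0 as t → +∞. -/
/-!
The quadratic form `V v = b v v` of the common Lyapunov form `b` decays exponentially along every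
trajectory. The form `-lyapunovForm b (f i)` is positive definite, hence coercive by compactness of
the unit sphere, so it dominates `ε V` for all small `ε > 0`; finitely many subsystems share one
such `ε`. Whatever the value of `σ t`, the right derivative of `V (x t)` is then at most
`-ε V (x t)`, so Grönwall's inequality gives `V (x t) ≤ V (x 0) exp (-ε t)` without any regularity
of `σ`, and coercivity of `b` turns this into `x t → 0`.
-/

open Matrix

open Filter Set Topology

section CoerciveForms

variable {E : Type*}

lemma isCoercive_of_forall_pos [NormedAddCommGroup E] [NormedSpace ℝ E] [FiniteDimensional ℝ E]
    {b : E →L[ℝ] E →L[ℝ] ℝ} (hb : ∀ v, v ≠ 0 → 0 < b v v) : IsCoercive b := by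
  have hcont : Continuous fun v => b v v := by fun_prop
  obtain ⟨c, hc, hcb⟩ := (isCompact_sphere (0 : E) 1).exists_forall_le' hcont.continuousOn
    (a := 0) fun v hv => hb v (ne_zero_of_mem_unit_sphere ⟨v, hv⟩)
  refine ⟨c, hc, fun v => ?_⟩
  rcases eq_or_ne v 0 with rfl | hv
  · simp
  have hunit : ‖v‖⁻¹ • v ∈ Metric.sphere (0 : E) 1 := by simp [norm_smul, hv]
  calc c * ‖v‖ * ‖v‖ ≤ b (‖v‖⁻¹ • v) (‖v‖⁻¹ • v) * ‖v‖ * ‖v‖ := by gcongr; exact hcb _ hunit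
    _ = b v v := by
      have := norm_ne_zero_iff.mpr hv
      simp only [map_smul, _root_.smul_apply, smul_eq_mul]
      field_simp

variable [SeminormedAddCommGroup E] [NormedSpace ℝ E]

lemma eventually_mul_apply_self_le_of_isCoercive {q : E →L[ℝ] E →L[ℝ] ℝ} (hq : IsCoercive q)
    (b : E →L[ℝ] E →L[ℝ] ℝ) : ∀ᶠ ε in 𝓝 (0 : ℝ), ∀ v, ε * b v v ≤ q v v := by
  obtain ⟨c, hc, hcq⟩ := hq
  have hsmall : Tendsto (fun ε : ℝ => |ε| * ‖b‖) (𝓝 0) (𝓝 0) :=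
    Continuous.tendsto' (by fun_prop) _ _ (by simp)
  filter_upwards [hsmall.eventually_le_const hc] with ε hε v
  calc ε * b v v ≤ |ε| * ‖b v v‖ := (le_abs_self _).trans_eq (abs_mul _ _)
    _ ≤ |ε| * (‖b‖ * ‖v‖ * ‖v‖) := by gcongr; exact b.le_opNorm₂ v v
    _ = |ε| * ‖b‖ * ‖v‖ * ‖v‖ := by ring
    _ ≤ c * ‖v‖ * ‖v‖ := by gcongr
    _ ≤ q v v := hcq v

lemma tendsto_zero_of_isCoercive {α : Type*} {l : Filter α} {x : α → E}
    {b : E →L[ℝ] E →L[ℝ] ℝ} (hb : IsCoercive b) (hx : Tendsto (fun a => b (x a) (x a)) l (𝓝 0)) :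
    Tendsto x l (𝓝 0) := by
  obtain ⟨c, hc, hcb⟩ := hb
  have hsq : Tendsto (fun a => ‖x a‖ ^ 2) l (𝓝 0) := by
    refine squeeze_zero (fun a => sq_nonneg _) (fun a => ?_) (by simpa using hx.const_mul c⁻¹)
    rw [le_inv_mul_iff₀ hc, sq, ← mul_assoc]
    exact hcb (x a)
  rw [tendsto_zero_iff_norm_tendsto_zero]
  simpa using hsq.sqrt

end CoerciveForms

lemma le_mul_exp_of_forall_right_deriv_le {u u' : ℝ → ℝ} {a k : ℝ} (hu : ContinuousOn u (Ici a))
    (hu' : ∀ t, a ≤ t → HasDerivWithinAt u (u' t) (Ici t) t)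
    (hle : ∀ t, a ≤ t → u' t ≤ k * u t) {t : ℝ} (ht : a ≤ t) :
    u t ≤ u a * Real.exp (k * (t - a)) := by
  rw [← gronwallBound_ε0]
  exact le_gronwallBound_of_liminf_deriv_right_le (hu.mono Icc_subset_Ici_self)
    (fun s hs _ hr => (hu' s hs.1).liminf_right_slope_le hr) le_rfl
    (fun s hs => (hle s hs.1).trans_eq (add_zero _).symm) t ⟨ht, le_rfl⟩

section SwitchedSystems

variable {ι E : Type*} [NormedAddCommGroup E] [NormedSpace ℝ E]

/-- A trajectory on `[0, ∞)` of the switched linear system `ẋ = f (σ t) x`. Only right derivatives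
are required, so that `x` may have corners at the switching times of a right-continuous `σ`. -/
structure IsSwitchedTrajectory (f : ι → E →L[ℝ] E) (σ : ℝ → ι) (x : ℝ → E) : Prop where
  continuousOn : ContinuousOn x (Ici 0)
  hasDerivWithinAt : ∀ t, 0 ≤ t → HasDerivWithinAt x (f (σ t) (x t)) (Ici t) t

/-- The bilinear form `(v, w) ↦ b (f v) w + b v (f w)` of the Lyapunov inequality: its value at
`(v, v)` is the derivative of `v ↦ b v v` along `ẋ = f x`. In coordinates its matrix is
`Mᵀ * P + P * M`, with `P` the matrix of `b` and `M` that of `f`. -/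
noncomputable def lyapunovForm (b : E →L[ℝ] E →L[ℝ] ℝ) (f : E →L[ℝ] E) : E →L[ℝ] E →L[ℝ] ℝ :=
  b.bilinearComp f (.id ℝ E) + b.bilinearComp (.id ℝ E) f

lemma lyapunovForm_apply (b : E →L[ℝ] E →L[ℝ] ℝ) (f : E →L[ℝ] E) (v w : E) :
    lyapunovForm b f v w = b (f v) w + b v (f w) := rfl

lemma lyapunovForm_toBilin'_toLin' {n : Type*} [Fintype n] [DecidableEq n] (P M : Matrix n n ℝ)
    (v w : n → ℝ) :
    lyapunovForm (toBilin' P).toContinuousBilinearMap (toLin' M).toContinuousLinearMap v w =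
      v ⬝ᵥ (Mᵀ * P + P * M) *ᵥ w := by
  simp only [lyapunovForm_apply, LinearMap.toContinuousBilinearMap_apply,
    LinearMap.coe_toContinuousLinearMap', toLin'_apply, toBilin'_apply', add_mulVec,
    dotProduct_add, ← mulVec_mulVec]
  rw [dotProduct_mulVec v Mᵀ, vecMul_transpose]

lemma apply_self_le_mul_exp_of_isSwitchedTrajectory {b : E →L[ℝ] E →L[ℝ] ℝ} {f : ι → E →L[ℝ] E}
    {k : ℝ} (hf : ∀ i v, lyapunovForm b (f i) v v ≤ k * b v v) {σ : ℝ → ι} {x : ℝ → E}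
    (hx : IsSwitchedTrajectory f σ x) {t : ℝ} (ht : 0 ≤ t) :
    b (x t) (x t) ≤ b (x 0) (x 0) * Real.exp (k * t) := by
  have hcont : ContinuousOn (fun s => b (x s) (x s)) (Ici 0) := by
    have := hx.continuousOn
    fun_prop
  have hderiv (s : ℝ) (hs : 0 ≤ s) : HasDerivWithinAt (fun s => b (x s) (x s))
      (lyapunovForm b (f (σ s)) (x s) (x s)) (Ici s) s := by
    have hxs := hx.hasDerivWithinAt s hs
    rw [lyapunovForm_apply, add_comm]
    exact b.hasDerivWithinAt_of_bilinear hxs hxs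
  simpa using le_mul_exp_of_forall_right_deriv_le hcont hderiv (fun s _ => hf (σ s) (x s)) ht

theorem switched_system_asymptotic_stability_general [Finite ι] [FiniteDimensional ℝ E]
    {b : E →L[ℝ] E →L[ℝ] ℝ} (hb : ∀ v, v ≠ 0 → 0 < b v v) {f : ι → E →L[ℝ] E}
    (hf : ∀ i v, v ≠ 0 → lyapunovForm b (f i) v v < 0) {σ : ℝ → ι} {x : ℝ → E}
    (hx : IsSwitchedTrajectory f σ x) : Tendsto x atTop (𝓝 0) := by
  have hb_coercive : IsCoercive b := isCoercive_of_forall_pos hb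
  have hf_coercive (i : ι) : IsCoercive (-lyapunovForm b (f i)) :=
    isCoercive_of_forall_pos fun v hv => neg_pos.mpr (hf i v hv)
  have hrate : ∀ᶠ ε in 𝓝[>] (0 : ℝ), ∀ i v, ε * b v v ≤ (-lyapunovForm b (f i)) v v :=
    nhdsWithin_le_nhds <| eventually_all.mpr fun i =>
      eventually_mul_apply_self_le_of_isCoercive (hf_coercive i) b
  obtain ⟨ε, hεf, hε : 0 < ε⟩ := (hrate.and self_mem_nhdsWithin).exists
  have hdecay (t : ℝ) (ht : 0 ≤ t) : b (x t) (x t) ≤ b (x 0) (x 0) * Real.exp (-ε * t) :=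
    apply_self_le_mul_exp_of_isSwitchedTrajectory
      (fun i v => by rw [neg_mul]; exact le_neg_of_le_neg (hεf i v)) hx ht
  have hexp : Tendsto (fun t => b (x 0) (x 0) * Real.exp (-ε * t)) atTop (𝓝 0) := by
    simpa using (Real.tendsto_exp_atBot.comp
      (tendsto_id.const_mul_atTop_of_neg (neg_neg_of_pos hε))).const_mul (b (x 0) (x 0))
  have hb_nonneg (v : E) : 0 ≤ b v v := (eq_or_ne v 0).elim (by rintro rfl; simp) fun hv =>
    (hb v hv).le
  exact tendsto_zero_of_isCoercive hb_coercive <|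
    squeeze_zero' (.of_forall fun t => hb_nonneg (x t))
      ((eventually_ge_atTop 0).mono hdecay) hexp

end SwitchedSystems

/-- Stability conclusion of the paper's Corollary 2.1(a): a common quadratic
Lyapunov function satisfying the closed-loop Lyapunov matrix inequality for each
subsystem guarantees asymptotic stability of the switched linear system
`ẋ = (A_{σ(t)} + BK) x` under arbitrary switching. -/
theorem switched_system_asymptotic_stability {n m N : ℕ}
    (P : Matrix (Fin n) (Fin n) ℝ) (B : Matrix (Fin n) (Fin m) ℝ)
    (K : Matrix (Fin m) (Fin n) ℝ) (A : Fin N → Matrix (Fin n) (Fin n) ℝ)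
    (hPsymm : Pᵀ = P)
    (hPpos : ∀ v : Fin n → ℝ, v ≠ 0 → 0 < v ⬝ᵥ P.mulVec v)
    (hA : ∀ i : Fin N, ∀ v : Fin n → ℝ, v ≠ 0 →
      v ⬝ᵥ ((A i + B * K)ᵀ * P + P * (A i + B * K)).mulVec v < 0)
    (σ : ℝ → Fin N)
    (x : ℝ → (Fin n → ℝ))
    (hx : ∀ t : ℝ, 0 ≤ t → HasDerivAt x ((A (σ t) + B * K).mulVec (x t)) t) :
    Filter.Tendsto x Filter.atTop (nhds 0) := by
  refine switched_system_asymptotic_stability_general (b := (toBilin' P).toContinuousBilinearMap)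
    (f := fun i => (toLin' (A i + B * K)).toContinuousLinearMap) (σ := σ)
    (by simpa [toBilin'_apply'] using hPpos) (fun i v hv => ?_)
    ⟨fun t ht => (hx t ht).continuousAt.continuousWithinAt, fun t ht => (hx t ht).hasDerivWithinAt⟩
  rw [lyapunovForm_toBilin'_toLin']
  exact hA i v hv
end

section
/- For a ∈ ℝ, let Ã(a) be the 3×3 real matrix with rows (−(25a+10), 25a+10, 0), (28−35a, 29a−1, 0), (0, 0, −(a+8)/3). Let P be a symmetric positive definite 3×3 real matrix, B a 3×m real matrix and K an m×3 real matrix such that both (Ã(0) + BK)ᵀ P + P (Ã(0) + BK) and (Ã(1) + BK)ᵀ P + P (Ã(1) + BK) are negative definite. Then for every a ∈ [0, 1], the matrix (Ã(a) + BK)ᵀ P + P (Ã(a) + BK) is negative definite. -/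
/-!
For a fixed `P`, the matrices `X` with `Xᵀ * P + P * X` negative definite form a convex set, being
cut out by the strict linear inequalities `v ⬝ᵥ (Xᵀ * P + P * X) *ᵥ v < 0`. An affine family of
matrices that lies in this set at the vertices of a polytope of parameters thus stays in it over
the whole polytope; the closed-loop family `a ↦ Ã(a) + B * K` on `[0, 1] = conv {0, 1}` is one.
-/

open Matrix

section Lyapunov

variable {n R E : Type*} [Fintype n] [CommRing R]

/-- Negative definiteness of the quadratic form `v ↦ v ⬝ᵥ M *ᵥ v`, which is the condition in the
Lyapunov inequality. Unlike for `Matrix.PosDef`, `M` is not required to be symmetric. -/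
def IsNegDef [LT R] (M : Matrix n n R) : Prop :=
  ∀ v : n → R, v ≠ 0 → v ⬝ᵥ M *ᵥ v < 0

/-- The Lyapunov operator `X ↦ Xᵀ * P + P * X` of continuous-time linear systems, bundled as a
linear map so that it preserves convex combinations. -/
def lyapunovOperator (P : Matrix n n R) : Matrix n n R →ₗ[R] Matrix n n R where
  toFun X := Xᵀ * P + P * X
  map_add' X Y := by
    rw [transpose_add, Matrix.add_mul, Matrix.mul_add, add_add_add_comm]
  map_smul' c X := by
    rw [transpose_smul, Matrix.smul_mul, Matrix.mul_smul, smul_add, RingHom.id_apply]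

theorem isLinearMap_dotProduct_mulVec {m : Type*} [Fintype m] (v : m → R) (w : n → R) :
    IsLinearMap R fun M : Matrix m n R => v ⬝ᵥ M *ᵥ w where
  map_add M N := by rw [add_mulVec, dotProduct_add]
  map_smul c M := by rw [smul_mulVec, dotProduct_smul]

variable [PartialOrder R] [IsStrictOrderedRing R]

variable (n R) in
theorem convex_setOf_isNegDef : Convex R {M : Matrix n n R | IsNegDef M} := by
  simp only [IsNegDef, Set.ofPred_forall]
  exact convex_iInter₂ fun v _ => convex_halfSpace_lt (isLinearMap_dotProduct_mulVec v v) 0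

theorem convex_setOf_isNegDef_lyapunovOperator (P : Matrix n n R) :
    Convex R {X : Matrix n n R | IsNegDef (lyapunovOperator P X)} :=
  (convex_setOf_isNegDef n R).linear_preimage (lyapunovOperator P)

theorem isNegDef_lyapunovOperator_of_mem_convexHull [AddCommGroup E] [Module R E]
    (P : Matrix n n R) (A : E →ᵃ[R] Matrix n n R) {S : Set E}
    (hS : ∀ x ∈ S, IsNegDef (lyapunovOperator P (A x))) {x : E} (hx : x ∈ convexHull R S) :
    IsNegDef (lyapunovOperator P (A x)) :=
  convexHull_min hS ((convex_setOf_isNegDef_lyapunovOperator P).affine_preimage A) hx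

end Lyapunov

/-- The system matrices `Ã(a)` of the unified chaotic family, as the affine path through the
linear parts of the Lorenz system (`a = 0`) and of the Chen system (`a = 1`). -/
noncomputable def unifiedChaotic : ℝ →ᵃ[ℝ] Matrix (Fin 3) (Fin 3) ℝ :=
  AffineMap.lineMap
    !![-10, 10, 0;
       28, -1, 0;
       0, 0, -(8 / 3)]
    !![-35, 35, 0;
       -7, 28, 0;
       0, 0, -3]

theorem unifiedChaotic_apply (a : ℝ) :
    unifiedChaotic a =
      !![-(25 * a + 10), 25 * a + 10, 0;
         28 - 35 * a, 29 * a - 1, 0;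
         0, 0, -((a + 8) / 3)] := by
  ext i j
  fin_cases i <;> fin_cases j <;>
    simp [unifiedChaotic, AffineMap.lineMap_apply_module] <;> ring

theorem unified_chaotic_lyapunov_vertices_general {m : Type*} [Fintype m]
    (P : Matrix (Fin 3) (Fin 3) ℝ) (B : Matrix (Fin 3) m ℝ) (K : Matrix m (Fin 3) ℝ)
    (h0 : IsNegDef (lyapunovOperator P (unifiedChaotic 0 + B * K)))
    (h1 : IsNegDef (lyapunovOperator P (unifiedChaotic 1 + B * K))) :
    ∀ a ∈ Set.Icc (0 : ℝ) 1, IsNegDef (lyapunovOperator P (unifiedChaotic a + B * K)) := by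
  intro a ha
  let closedLoop := unifiedChaotic + AffineMap.const ℝ ℝ (B * K)
  have hvertices : ∀ x ∈ ({0, 1} : Set ℝ), IsNegDef (lyapunovOperator P (closedLoop x)) := by
    rintro x (rfl | rfl)
    exacts [h0, h1]
  have hmem : a ∈ convexHull ℝ {0, 1} := by
    rwa [convexHull_pair, segment_eq_Icc zero_le_one]
  exact isNegDef_lyapunovOperator_of_mem_convexHull P closedLoop hvertices hmem

/-- Specialization of the paper's Remark 1 and Theorem 4 to the unified chaotic
system: checking the closed-loop Lyapunov matrix inequality at the two polytope
vertices `Ã(0)` and `Ã(1)` suffices for all `a ∈ [0,1]`. -/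
theorem unified_chaotic_lyapunov_vertices {m : ℕ}
    (Atil : ℝ → Matrix (Fin 3) (Fin 3) ℝ)
    (hAtil : ∀ a : ℝ, Atil a =
      !![-(25 * a + 10), 25 * a + 10, 0;
         28 - 35 * a, 29 * a - 1, 0;
         0, 0, -((a + 8) / 3)])
    (P : Matrix (Fin 3) (Fin 3) ℝ)
    (hPsymm : Pᵀ = P)
    (hPpos : ∀ v : Fin 3 → ℝ, v ≠ 0 → 0 < v ⬝ᵥ P.mulVec v)
    (B : Matrix (Fin 3) (Fin m) ℝ) (K : Matrix (Fin m) (Fin 3) ℝ)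
    (h0 : ∀ v : Fin 3 → ℝ, v ≠ 0 →
      v ⬝ᵥ ((Atil 0 + B * K)ᵀ * P + P * (Atil 0 + B * K)).mulVec v < 0)
    (h1 : ∀ v : Fin 3 → ℝ, v ≠ 0 →
      v ⬝ᵥ ((Atil 1 + B * K)ᵀ * P + P * (Atil 1 + B * K)).mulVec v < 0) :
    ∀ a ∈ Set.Icc (0 : ℝ) 1, ∀ v : Fin 3 → ℝ, v ≠ 0 →
      v ⬝ᵥ ((Atil a + B * K)ᵀ * P + P * (Atil a + B * K)).mulVec v < 0 := by
  obtain rfl : Atil = unifiedChaotic :=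
    funext fun a => (hAtil a).trans (unifiedChaotic_apply a).symm
  exact unified_chaotic_lyapunov_vertices_general P B K h0 h1
end
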